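/- Let a, b ∈ 𝔽_q^* with a ≠ wb for every w ∈ 𝔽_p^*, write α = Tr(a²), β = Tr(b²), γ = Tr(ab), and let Ω = #{d ∈ 𝔽_q : Tr(d²) = 0, Tr(ad) = 0 and Tr(bd) = 0}. If m is even, then (as complex numbers): Ω = p^{m−3} + p^{−1}(p−1)G if α = β = γ = 0; Ω = p^{m−3} if α ≠ 0, β ≠ 0 and αβ = γ²; Ω = p^{m−3} + η̄(γ² − αβ)·p^{−2}(p−1)G if α ≠ 0, β ≠ 0 and αβ ≠ γ²; Ω = p^{m−3} + p^{−2}(p−1)G if γ ≠ 0 and at most one of α, β is nonzero; and Ω = p^{m−3} if γ = 0 and exactly one of α, β is nonzero. -/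

import Mathlib

/-!
Detecting the three trace conditions with additive characters expresses `p³ Ω` as a sum, over the
coefficients `x` of `d²` and `y, z` of `ad, bd`, of the Weil sums
`∑ d, χ₁(x d² + (y a + z b) d)`. Completing the square evaluates each of them: since `m` is even,
every element of the prime field is a square in `𝔽_q`, so for `x ≠ 0` the sum is
`G · ζ_p^(-Tr((y a + z b)²) / (4x))`. As `-1/(4x)` runs over `𝔽_p^*`, summing over `x`
detects the zeros of the binary form `Tr((y a + z b)²) = α y² + 2 γ y z + β z²`. Its number of zeros
is governed by the quadratic character of its discriminant.
-/


open Finset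
open scoped Classical

noncomputable section

/-- `ζ_p = exp(2πi/p)`. -/
def zeta (p : ℕ) : ℂ := Complex.exp (2 * Real.pi * Complex.I / p)

/-- The canonical additive character of `ℤ/p`: `χ̄₁(c) = ζ_p^c`. -/
def chiBar (p : ℕ) (c : ZMod p) : ℂ := zeta p ^ c.val

/-- The quadratic character of `(ℤ/p)^*`, extended by `η̄(0) = 0`. -/
def etaBar (p : ℕ) (c : ZMod p) : ℂ :=
  if c = 0 then 0 else if IsSquare c then 1 else -1

/-- The quadratic character of `F^*`, extended by `η(0) = 0`. -/
def etaQ (F : Type) [Field F] (x : F) : ℂ :=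
  if x = 0 then 0 else if IsSquare x then 1 else -1

/-- The absolute trace map from `F` to `ℤ/p`. -/
def Trq (p : ℕ) (F : Type) [Field F] [Algebra (ZMod p) F] (x : F) : ZMod p :=
  Algebra.trace (ZMod p) F x

/-- The canonical additive character of `F`: `χ₁(x) = ζ_p^{Tr x}`. -/
def chiQ (p : ℕ) (F : Type) [Field F] [Algebra (ZMod p) F] (x : F) : ℂ :=
  chiBar p (Trq p F x)

/-- The quadratic Gauss sum `G` over `F`. -/
def GaussQ (p : ℕ) (F : Type) [Field F] [Fintype F] [Algebra (ZMod p) F] : ℂ :=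
  ∑ x ∈ univ.filter (fun x : F => x ≠ 0), etaQ F x * chiQ p F x

/-- The quadratic Gauss sum `Ḡ` over `ℤ/p`. -/
def GaussP (p : ℕ) [NeZero p] : ℂ :=
  ∑ y ∈ univ.filter (fun y : ZMod p => y ≠ 0), etaBar p y * chiBar p y

section WeilSum

variable {F R : Type*} [Field F] [Fintype F] [DecidableEq F] [CommRing R]

/-- The quadratic Gauss sum `∑ y, η(y) Ψ(y)` of an additive character `Ψ`, where the quadratic
character `η` of the finite field `F` is given values in the target ring of `Ψ`. -/
def quadraticGaussSum (Ψ : AddChar F R) : R :=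
  gaussSum ((quadraticChar F).ringHomComp (Int.castRingHom R)) Ψ

lemma card_filter_sq_eq (hF : ringChar F ≠ 2) (y : F) :
    (#{d : F | d ^ 2 = y} : ℤ) = quadraticChar F y + 1 := by
  rw [← quadraticChar_card_sqrts hF, Set.toFinset_ofPred]

lemma sum_comp_sq (hF : ringChar F ≠ 2) (f : F → R) :
    ∑ d : F, f (d ^ 2) = ∑ y : F, ((quadraticChar F y : R) + 1) * f y := by
  rw [← sum_fiberwise univ (fun d : F ↦ d ^ 2)]
  refine sum_congr rfl fun y _ ↦ ?_
  have hcard : ((quadraticChar F y : R) + 1) = (#{d : F | d ^ 2 = y} : R) := by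
    exact_mod_cast congrArg (Int.cast (R := R)) (card_filter_sq_eq hF y).symm
  rw [hcard, ← nsmul_eq_mul, ← sum_const]
  exact sum_congr rfl fun d hd ↦ by rw [(mem_filter.1 hd).2]

variable [IsDomain R]

lemma sum_addChar_sq (hF : ringChar F ≠ 2) {Ψ : AddChar F R} (hΨ : Ψ ≠ 1) :
    ∑ d : F, Ψ (d ^ 2) = quadraticGaussSum Ψ := by
  simp [sum_comp_sq hF, add_mul, sum_add_distrib, AddChar.sum_eq_zero_of_ne_one hΨ,
    quadraticGaussSum, gaussSum]

lemma sum_addChar_mul_sq (hF : ringChar F ≠ 2) {Ψ : AddChar F R} (hΨ : Ψ ≠ 1) {c : F}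
    (hc : c ≠ 0) :
    ∑ d : F, Ψ (c * d ^ 2) = quadraticChar F c * quadraticGaussSum Ψ := by
  have hshift : Ψ.mulShift c ≠ 1 := AddChar.IsPrimitive.of_ne_one hΨ hc
  have hsq : (quadraticChar F c : R) * quadraticChar F c = 1 := by
    exact_mod_cast congrArg (Int.cast (R := R)) ((sq _).symm.trans (quadraticChar_sq_one hc))
  have hgauss : quadraticChar F c * quadraticGaussSum (Ψ.mulShift c) = quadraticGaussSum Ψ :=
    gaussSum_mulShift ((quadraticChar F).ringHomComp (Int.castRingHom R)) Ψ (.mk0 c hc)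
  calc ∑ d : F, Ψ (c * d ^ 2) = quadraticGaussSum (Ψ.mulShift c) := sum_addChar_sq hF hshift
    _ = quadraticChar F c * quadraticGaussSum Ψ := by rw [← hgauss, ← mul_assoc, hsq, one_mul]

lemma sum_addChar_quadratic (hF : ringChar F ≠ 2) {Ψ : AddChar F R} (hΨ : Ψ ≠ 1) {c : F}
    (hc : c ≠ 0) (u : F) :
    ∑ d : F, Ψ (c * d ^ 2 + u * d) =
      quadraticChar F c * quadraticGaussSum Ψ * Ψ (-(4 * c)⁻¹ * u ^ 2) := by
  have h2 : (2 : F) ≠ 0 := Ring.two_ne_zero hF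
  have h4 : (4 : F) = 2 * 2 := by norm_num
  have complete_square (d : F) :
      c * d ^ 2 + u * d = c * (d + u / (2 * c)) ^ 2 + -(4 * c)⁻¹ * u ^ 2 := by
    rw [h4]
    field_simp
    ring
  simp_rw [complete_square, AddChar.map_add_eq_mul, ← sum_mul]
  rw [← sum_addChar_mul_sq hF hΨ hc]
  congr 1
  exact Equiv.sum_comp (Equiv.addRight (u / (2 * c))) fun d ↦ Ψ (c * d ^ 2)

end WeilSum

lemma isSquare_algebraMap_of_even_finrank {K F : Type*} [Field K] [Field F] [Finite F]
    [Algebra K F] (hK : ringChar K ≠ 2) (hKF : Even (Module.finrank K F)) (c : K) :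
    IsSquare (algebraMap K F c) := by
  have := Fintype.ofFinite F
  have := Fintype.ofInjective _ (algebraMap K F).injective
  obtain rfl | hc := eq_or_ne c 0
  · simp
  obtain ⟨k, hk⟩ := hKF
  obtain ⟨r, hr⟩ : Odd (Fintype.card K ^ k) :=
    (Nat.odd_iff.2 (FiniteField.odd_card_of_char_ne_two hK)).pow
  have hcr : c ^ (2 * r) = 1 := by
    refine mul_right_cancel₀ hc ?_
    rw [one_mul, ← pow_succ, ← hr, FiniteField.pow_card_pow]
  have hcard : Fintype.card F / 2 = 2 * r * (r + 1) := by
    have : Fintype.card F = 2 * (2 * r * (r + 1)) + 1 := by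
      rw [Module.card_eq_pow_finrank (K := K), hk, pow_add, hr]
      ring
    omega
  have hF : ringChar F ≠ 2 := Algebra.ringChar_eq K F ▸ hK
  rw [FiniteField.isSquare_iff hF (by simpa using hc), hcard, pow_mul, ← map_pow, hcr, map_one,
    one_pow]

section TraceChar

variable {K R : Type*} (F : Type*) [Field K] [Field F] [Algebra K F] [CommRing R]

/-- The additive character `x ↦ ψ (Tr x)` of an extension `F` of `K` obtained from an additive
character `ψ` of `K`; the canonical character `χ₁` of `𝔽_q` arises in this way from `𝔽_p`. -/
def traceChar (ψ : AddChar K R) : AddChar F R :=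
  ψ.compAddMonoidHom (Algebra.trace K F).toAddMonoidHom

variable {F}

lemma traceChar_apply (ψ : AddChar K R) (x : F) : traceChar F ψ x = ψ (Algebra.trace K F x) := rfl

lemma traceChar_smul (ψ : AddChar K R) (c : K) (x : F) :
    traceChar F ψ (c • x) = ψ (c * Algebra.trace K F x) := by
  rw [traceChar_apply, map_smul, smul_eq_mul]

lemma traceChar_ne_one [Finite F] {ψ : AddChar K R} (hψ : ψ ≠ 1) : traceChar F ψ ≠ 1 := by
  have : Finite K := .of_injective _ (algebraMap K F).injective
  exact (AddChar.compAddMonoidHom_injective_left _ (Algebra.trace_surjective K F)).ne hψ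

end TraceChar

section Orthogonality

variable {K R : Type*} [Field K] [Fintype K] [DecidableEq K] [CommRing R] [IsDomain R]

lemma sum_addChar_mul {ψ : AddChar K R} (hψ : ψ ≠ 1) (t : K) :
    ∑ x : K, ψ (x * t) = if t = 0 then (Fintype.card K : R) else 0 := by
  rw [AddChar.sum_mulShift t (.of_ne_one hψ), Nat.cast_ite, Nat.cast_zero]

variable {ι : Type*} [Fintype ι] [DecidableEq ι]

lemma sum_addChar_dotProduct {ψ : AddChar K R} (hψ : ψ ≠ 1) (t : ι → K) :
    ∑ y : ι → K, ψ (∑ i, y i * t i) =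
      if ∀ i, t i = 0 then (Fintype.card K : R) ^ Fintype.card ι else 0 := by
  have map_sum_eq_prod (f : ι → K) : ψ (∑ i, f i) = ∏ i, ψ (f i) :=
    map_prod ψ.toMonoidHom (fun i ↦ Multiplicative.ofAdd (f i)) univ
  simp_rw [map_sum_eq_prod]
  rw [← Fintype.prod_sum fun i x ↦ ψ (x * t i)]
  simp_rw [sum_addChar_mul hψ]
  rw [Fintype.prod_ite_zero, prod_const, card_univ]

variable {F : Type*} [Field F] [Algebra K F]

lemma sum_sum_traceChar_eq_ite {ψ : AddChar K R} (hψ : ψ ≠ 1) (v : ι → F) (d : F) :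
    ∑ y : ι → K, ∑ x : K, traceChar F ψ (x • d ^ 2 + (∑ i, y i • v i) * d) =
      if Algebra.trace K F (d ^ 2) = 0 ∧ ∀ i, Algebra.trace K F (v i * d) = 0
      then (Fintype.card K : R) ^ (Fintype.card ι + 1) else 0 := by
  have traceChar_eq_mul (y : ι → K) (x : K) : traceChar F ψ (x • d ^ 2 + (∑ i, y i • v i) * d) =
      ψ (∑ i, y i * Algebra.trace K F (v i * d)) * ψ (x * Algebra.trace K F (d ^ 2)) := by
    rw [← AddChar.map_add_eq_mul, traceChar_apply, add_comm]
    simp [sum_mul]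
  simp_rw [traceChar_eq_mul, ← mul_sum, ← sum_mul, sum_addChar_mul hψ, sum_addChar_dotProduct hψ,
    ite_and]
  split_ifs <;> simp [pow_succ]

end Orthogonality

section TraceWeilSum

variable {K F R : Type*} [Field K] [Field F] [Fintype F] [DecidableEq F] [Algebra K F]
  [CommRing R] [IsDomain R]

lemma sum_traceChar_quadratic (hK : ringChar K ≠ 2) (hKF : Even (Module.finrank K F))
    {ψ : AddChar K R} (hψ : ψ ≠ 1) {x : K} (hx : x ≠ 0) (u : F) :
    ∑ d : F, traceChar F ψ (x • d ^ 2 + u * d) =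
      quadraticGaussSum (traceChar F ψ) * ψ (-(4 * x)⁻¹ * Algebra.trace K F (u ^ 2)) := by
  have hF : ringChar F ≠ 2 := Algebra.ringChar_eq K F ▸ hK
  have hx' : algebraMap K F x ≠ 0 := by simpa using hx
  have hη : quadraticChar F (algebraMap K F x) = 1 :=
    (quadraticChar_one_iff_isSquare hx').2 (isSquare_algebraMap_of_even_finrank hK hKF x)
  simp_rw [← traceChar_smul, Algebra.smul_def]
  rw [sum_addChar_quadratic hF (traceChar_ne_one hψ) hx', hη, Int.cast_one, one_mul, map_neg,
    map_inv₀, map_mul (algebraMap K F), map_ofNat]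

variable [Fintype K] [DecidableEq K]

lemma sum_sum_traceChar_quadratic (hK : ringChar K ≠ 2) (hKF : Even (Module.finrank K F))
    {ψ : AddChar K R} (hψ : ψ ≠ 1) (u : F) :
    ∑ x : K, ∑ d : F, traceChar F ψ (x • d ^ 2 + u * d) =
      (if u = 0 then (Fintype.card F : R) else 0) + quadraticGaussSum (traceChar F ψ) *
        ((if Algebra.trace K F (u ^ 2) = 0 then (Fintype.card K : R) else 0) - 1) := by
  set τ := Algebra.trace K F (u ^ 2)
  have h4 : (4 : K) ≠ 0 := by
    simpa [show (4 : K) = 2 * 2 by norm_num] using Ring.two_ne_zero hK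
  have sum_ne_zero : ∑ x ∈ univ.erase (0 : K), ψ (-(4 * x)⁻¹ * τ) =
      (if τ = 0 then (Fintype.card K : R) else 0) - 1 := by
    rw [← sum_addChar_mul hψ, ← ((Equiv.mulLeft₀ (4 : K) h4).trans
      ((Equiv.inv K).trans (Equiv.neg K))).sum_comp, ← add_sum_erase univ _ (mem_univ 0)]
    simp
  have sum_zero : ∑ d : F, traceChar F ψ ((0 : K) • d ^ 2 + u * d) =
      if u = 0 then (Fintype.card F : R) else 0 := by
    simp [mul_comm u, sum_addChar_mul (traceChar_ne_one hψ)]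
  rw [← add_sum_erase univ _ (mem_univ 0), sum_zero, ← sum_ne_zero, mul_sum]
  congr 1
  exact sum_congr rfl fun x hx ↦ sum_traceChar_quadratic hK hKF hψ (ne_of_mem_erase hx) u

variable {ι : Type*} [Fintype ι] [DecidableEq ι]

theorem card_trace_sq_eq_zero_and_trace_mul_eq_zero (hK : ringChar K ≠ 2)
    (hKF : Even (Module.finrank K F)) {ψ : AddChar K R} (hψ : ψ ≠ 1) {v : ι → F}
    (hv : LinearIndependent K v) :
    (Fintype.card K : R) ^ (Fintype.card ι + 1) *
        #{d : F | Algebra.trace K F (d ^ 2) = 0 ∧ ∀ i, Algebra.trace K F (v i * d) = 0} =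
      Fintype.card F + quadraticGaussSum (traceChar F ψ) *
        (Fintype.card K * #{y : ι → K | Algebra.trace K F ((∑ i, y i • v i) ^ 2) = 0} -
          (Fintype.card K : R) ^ Fintype.card ι) := by
  have span_eq_zero (y : ι → K) : ∑ i, y i • v i = 0 ↔ y = 0 :=
    ⟨fun h ↦ funext (Fintype.linearIndependent_iff.1 hv y h), fun h ↦ by simp [h]⟩
  calc _ = ∑ d : F, ∑ y : ι → K, ∑ x : K,
        traceChar F ψ (x • d ^ 2 + (∑ i, y i • v i) * d) := by
        simp_rw [sum_sum_traceChar_eq_ite hψ, ← sum_filter, sum_const, nsmul_eq_mul, mul_comm]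
    _ = ∑ y : ι → K, ∑ x : K, ∑ d : F,
        traceChar F ψ (x • d ^ 2 + (∑ i, y i • v i) * d) := by
        rw [sum_comm]
        exact sum_congr rfl fun y _ ↦ sum_comm
    _ = _ := by
        simp_rw [sum_sum_traceChar_quadratic hK hKF hψ, span_eq_zero, sum_add_distrib, ← mul_sum,
          sum_sub_distrib, ← sum_filter, sum_const, nsmul_eq_mul]
        simp [filter_eq', mul_comm]

end TraceWeilSum

section BinaryForm

variable {K : Type*} [Field K] [Fintype K] [DecidableEq K]

/-- The zeros in `K²` of the binary quadratic form `a y² + 2 b y z + c z²`, including the origin. -/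
def binaryFormZeros (a b c : K) : Finset (K × K) :=
  {v | a * v.1 ^ 2 + 2 * b * (v.1 * v.2) + c * v.2 ^ 2 = 0}

lemma card_binaryFormZeros_zero : #(binaryFormZeros (0 : K) 0 0) = Fintype.card K ^ 2 := by
  simp [binaryFormZeros, sq]

lemma card_binaryFormZeros_swap (a b c : K) :
    #(binaryFormZeros c b a) = #(binaryFormZeros a b c) := by
  refine card_equiv (Equiv.prodComm K K) fun v ↦ ?_
  simp only [binaryFormZeros, mem_filter_univ, Equiv.prodComm_apply, Prod.fst_swap, Prod.snd_swap]
  ring_nf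

lemma card_binaryFormZeros_eq_sum (a b c : K) :
    #(binaryFormZeros a b c) =
      ∑ z : K, #{y : K | a * y ^ 2 + 2 * b * (y * z) + c * z ^ 2 = 0} := by
  simp only [binaryFormZeros, card_filter, Fintype.sum_prod_type_right]

lemma card_binaryFormZeros_of_left_ne_zero (hK : ringChar K ≠ 2) {a : K} (ha : a ≠ 0) (b c : K) :
    (#(binaryFormZeros a b c) : ℤ) =
      Fintype.card K + (Fintype.card K - 1) * quadraticChar K (b ^ 2 - a * c) := by
  have card_fiber (z : K) : (#{y : K | a * y ^ 2 + 2 * b * (y * z) + c * z ^ 2 = 0} : ℤ) =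
      quadraticChar K ((b ^ 2 - a * c) * z ^ 2) + 1 := by
    rw [← card_filter_sq_eq hK]
    congr 1
    refine card_equiv ((Equiv.mulLeft₀ a ha).trans (Equiv.addRight (b * z))) fun y ↦ ?_
    have complete_square : a * (a * y ^ 2 + 2 * b * (y * z) + c * z ^ 2) =
        (a * y + b * z) ^ 2 - (b ^ 2 - a * c) * z ^ 2 := by ring
    simp [← sub_eq_zero (b := _ * z ^ 2), ← complete_square, ha]
  have sum_quadraticChar_sq : ∑ z : K, quadraticChar K (z ^ 2) = Fintype.card K - 1 := by
    rw [← sum_erase univ (a := 0) (by simp),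
      sum_congr rfl fun z hz ↦ quadraticChar_sq_one' (ne_of_mem_erase hz)]
    simp [Nat.cast_sub Fintype.card_pos]
  rw [card_binaryFormZeros_eq_sum, Nat.cast_sum]
  simp_rw [card_fiber, map_mul, sum_add_distrib, ← mul_sum, sum_quadraticChar_sq]
  simp
  ring

lemma card_binaryFormZeros_hyperbolic (hK : ringChar K ≠ 2) {b : K} (hb : b ≠ 0) :
    (#(binaryFormZeros 0 b 0) : ℤ) = 2 * Fintype.card K - 1 := by
  have card_fiber {z : K} (hz : z ≠ 0) :
      #{y : K | 0 * y ^ 2 + 2 * b * (y * z) + 0 * z ^ 2 = 0} = 1 := by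
    simp [Ring.two_ne_zero hK, hb, hz, filter_eq']
  rw [card_binaryFormZeros_eq_sum, ← add_sum_erase univ _ (mem_univ 0),
    sum_congr rfl fun z hz ↦ card_fiber (ne_of_mem_erase hz)]
  simp [Nat.cast_sub Fintype.card_pos]
  ring

lemma card_binaryFormZeros_of_ne_zero (hK : ringChar K ≠ 2) {a b c : K}
    (h : a ≠ 0 ∨ b ≠ 0 ∨ c ≠ 0) :
    (#(binaryFormZeros a b c) : ℤ) =
      Fintype.card K + (Fintype.card K - 1) * quadraticChar K (b ^ 2 - a * c) := by
  by_cases ha : a = 0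
  · by_cases hc : c = 0
    · have hb : b ≠ 0 := by simpa [ha, hc] using h
      rw [ha, hc, card_binaryFormZeros_hyperbolic hK hb, mul_zero, sub_zero,
        quadraticChar_sq_one' hb]
      ring
    · rw [← card_binaryFormZeros_swap, card_binaryFormZeros_of_left_ne_zero hK hc, mul_comm c]
  · exact card_binaryFormZeros_of_left_ne_zero hK ha b c

end BinaryForm

section Pair

variable {K F R : Type*} [Field K] [Fintype K] [DecidableEq K] [Field F] [Algebra K F]

lemma card_trace_pair_sq_eq_zero (a b : F) :
    #{y : Fin 2 → K | Algebra.trace K F ((∑ i, y i • ![a, b] i) ^ 2) = 0} =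
      #(binaryFormZeros (Algebra.trace K F (a ^ 2)) (Algebra.trace K F (a * b))
        (Algebra.trace K F (b ^ 2))) := by
  refine card_equiv (finTwoArrowEquiv K) fun y ↦ ?_
  have expand : (y 0 • a + y 1 • b) ^ 2 =
      y 0 ^ 2 • a ^ 2 + (2 * (y 0 * y 1)) • (a * b) + y 1 ^ 2 • b ^ 2 := by
    simp only [Algebra.smul_def, map_mul, map_pow, map_ofNat]
    ring
  have reorder (α β γ : K) : y 0 ^ 2 * α + 2 * (y 0 * y 1) * γ + y 1 ^ 2 * β =
      α * y 0 ^ 2 + 2 * γ * (y 0 * y 1) + β * y 1 ^ 2 := by ring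
  simp [binaryFormZeros, Fin.sum_univ_two, expand, reorder]

variable [Fintype F] [DecidableEq F] [Field R] [CharZero R]

lemma card_trace_sq_eq_zero_and_trace_mul_pair_eq_zero (hK : ringChar K ≠ 2)
    (hKF : Even (Module.finrank K F)) {ψ : AddChar K R} (hψ : ψ ≠ 1) {a b : F}
    (hab : LinearIndependent K ![a, b]) :
    (#{d : F | Algebra.trace K F (d ^ 2) = 0 ∧ Algebra.trace K F (a * d) = 0 ∧
        Algebra.trace K F (b * d) = 0} : R) =
      (Fintype.card K : R) ^ ((Module.finrank K F : ℤ) - 3) +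
        (Fintype.card K : R) ^ (-2 : ℤ) * quadraticGaussSum (traceChar F ψ) *
          (#(binaryFormZeros (Algebra.trace K F (a ^ 2)) (Algebra.trace K F (a * b))
            (Algebra.trace K F (b ^ 2))) - Fintype.card K) := by
  have hq : (Fintype.card K : R) ≠ 0 := Nat.cast_ne_zero.2 Fintype.card_ne_zero
  have key := card_trace_sq_eq_zero_and_trace_mul_eq_zero hK hKF hψ hab
  simp only [card_trace_pair_sq_eq_zero, Fintype.card_fin, Fin.forall_fin_two,
    Matrix.cons_val_zero, Matrix.cons_val_one, Module.card_eq_pow_finrank (K := K) (V := F),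
    Nat.cast_pow, Nat.reduceSucc, Nat.reduceAdd] at key
  refine mul_left_cancel₀ (pow_ne_zero 3 hq) (key.trans ?_)
  rw [zpow_sub₀ hq, zpow_natCast, zpow_neg, zpow_ofNat, zpow_ofNat]
  field_simp

theorem Omega_card_m_even_general (hK : ringChar K ≠ 2) (hKF : Even (Module.finrank K F))
    {ψ : AddChar K R} (hψ : ψ ≠ 1) {a b : F} (hab : LinearIndependent K ![a, b])
    {α β γ : K} (hα : α = Algebra.trace K F (a ^ 2)) (hβ : β = Algebra.trace K F (b ^ 2))
    (hγ : γ = Algebra.trace K F (a * b)) {Ω : ℕ}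
    (hΩ : Ω = #{d : F | Algebra.trace K F (d ^ 2) = 0 ∧ Algebra.trace K F (a * d) = 0 ∧
      Algebra.trace K F (b * d) = 0})
    {q G : R} (hq : q = Fintype.card K) (hG : G = quadraticGaussSum (traceChar F ψ)) {m : ℕ}
    (hm : m = Module.finrank K F) :
    (α = 0 ∧ β = 0 ∧ γ = 0 → (Ω : R) = q ^ ((m : ℤ) - 3) + q⁻¹ * (q - 1) * G) ∧
    (α ≠ 0 ∧ β ≠ 0 ∧ α * β = γ ^ 2 → (Ω : R) = q ^ ((m : ℤ) - 3)) ∧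
    (α ≠ 0 ∧ β ≠ 0 ∧ α * β ≠ γ ^ 2 → (Ω : R) =
      q ^ ((m : ℤ) - 3) + quadraticChar K (γ ^ 2 - α * β) * q ^ (-2 : ℤ) * (q - 1) * G) ∧
    (γ ≠ 0 ∧ (α = 0 ∨ β = 0) → (Ω : R) = q ^ ((m : ℤ) - 3) + q ^ (-2 : ℤ) * (q - 1) * G) ∧
    (γ = 0 ∧ ((α ≠ 0 ∧ β = 0) ∨ (α = 0 ∧ β ≠ 0)) → (Ω : R) = q ^ ((m : ℤ) - 3)) := by
  have hΩN : (Ω : R) =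
      q ^ ((m : ℤ) - 3) + q ^ (-2 : ℤ) * G * (#(binaryFormZeros α γ β) - q) := by
    rw [hΩ, hα, hβ, hγ, hq, hG, hm,
      card_trace_sq_eq_zero_and_trace_mul_pair_eq_zero hK hKF hψ hab]
  have hΩ_ne (h : α ≠ 0 ∨ γ ≠ 0 ∨ β ≠ 0) : (Ω : R) =
      q ^ ((m : ℤ) - 3) + quadraticChar K (γ ^ 2 - α * β) * q ^ (-2 : ℤ) * (q - 1) * G := by
    have hN := congrArg (Int.cast (R := R)) (card_binaryFormZeros_of_ne_zero hK h)
    push_cast at hN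
    rw [hΩN, hN, hq]
    ring
  refine ⟨?_, fun ⟨hα0, _, hαβ⟩ ↦ ?_, fun ⟨hα0, _, _⟩ ↦ hΩ_ne (.inl hα0),
    fun ⟨hγ0, hαβ⟩ ↦ ?_, fun ⟨hγ0, hαβ⟩ ↦ ?_⟩
  · rintro ⟨rfl, rfl, rfl⟩
    have hq0 : q ≠ 0 := hq ▸ Nat.cast_ne_zero.2 Fintype.card_ne_zero
    rw [hΩN, card_binaryFormZeros_zero, Nat.cast_pow, ← hq, zpow_neg]
    norm_cast
    field_simp
  · simp [hΩ_ne (.inl hα0), hαβ]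
  · have hαβ0 : α * β = 0 := mul_eq_zero.2 hαβ
    simp [hΩ_ne (.inr (.inl hγ0)), hαβ0, quadraticChar_sq_one' hγ0, -map_pow]
  · have hαβ0 : α * β = 0 := mul_eq_zero.2 (hαβ.symm.imp And.left And.right)
    simp [hΩ_ne (hαβ.imp And.left (.inr ·.2)), hαβ0, hγ0]

end Pair

section Module

variable {K V : Type*} [Field K] [AddCommGroup V] [Module K V]

lemma linearIndependent_pair_of_forall_ne_smul {a b : V} (ha : a ≠ 0) (hb : b ≠ 0)
    (hab : ∀ w : K, w ≠ 0 → a ≠ w • b) : LinearIndependent K ![a, b] := by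
  refine LinearIndependent.pair_symm_iff.1 ((LinearIndependent.pair_iff' hb).2 fun w hw ↦ ?_)
  obtain rfl | hw0 := eq_or_ne w 0
  · exact ha (by simpa using hw.symm)
  · exact hab w hw0 hw.symm

lemma eq_finrank_of_card_eq_pow [Fintype K] [Fintype V] {m : ℕ}
    (h : Fintype.card V = Fintype.card K ^ m) : m = Module.finrank K V :=
  Nat.pow_right_injective (Fintype.one_lt_card (α := K))
    (h.symm.trans (Module.card_eq_pow_finrank (K := K)))

end Module

section PrimeField

lemma etaQ_eq_quadraticChar {F : Type} [Field F] [Fintype F] [DecidableEq F] (x : F) :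
    etaQ F x = quadraticChar F x := by
  rw [etaQ, quadraticChar_apply, quadraticCharFun]
  split_ifs <;> simp

variable {p : ℕ} [Fact p.Prime]

lemma etaBar_eq_quadraticChar (c : ZMod p) : etaBar p c = quadraticChar (ZMod p) c := by
  rw [etaBar, quadraticChar_apply, quadraticCharFun]
  split_ifs <;> simp

lemma chiBar_eq_stdAddChar (c : ZMod p) : chiBar p c = ZMod.stdAddChar c := by
  rw [ZMod.stdAddChar_apply, ZMod.toCircle_apply, chiBar, zeta, ← Complex.exp_nat_mul]
  ring_nf

lemma GaussQ_eq_quadraticGaussSum (F : Type) [Field F] [Fintype F] [DecidableEq F]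
    [Algebra (ZMod p) F] :
    GaussQ p F = quadraticGaussSum (traceChar F (ZMod.stdAddChar (N := p))) := by
  simp only [GaussQ, quadraticGaussSum, gaussSum, chiQ, chiBar_eq_stdAddChar, Trq,
    etaQ_eq_quadraticChar, traceChar_apply, MulChar.ringHomComp_apply, eq_intCast]
  convert sum_filter_of_ne fun x _ hx ↦ ?_
  rintro rfl
  simp at hx

lemma ringChar_zmod_ne_two_of_odd {n : ℕ} (hn : Odd n) : ringChar (ZMod n) ≠ 2 := by
  rw [ZMod.ringChar_zmod_n]
  exact hn.ne_two_of_dvd_nat dvd_rfl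

lemma stdAddChar_ne_one : ZMod.stdAddChar (N := p) ≠ 1 := by
  simpa using ZMod.isPrimitive_stdAddChar p one_ne_zero

end PrimeField

theorem Omega_card_m_even (p m : ℕ) [Fact (Nat.Prime p)] (hp : Odd p)
    (F : Type) [Field F] [Fintype F] [Algebra (ZMod p) F]
    (hm : 0 < m) (hq : Fintype.card F = p ^ m)
    (hmeven : Even m) (a b : F) (ha : a ≠ 0) (hb : b ≠ 0)
    (hab : ∀ w : ZMod p, w ≠ 0 → a ≠ algebraMap (ZMod p) F w * b)
    (α β γ : ZMod p) (hα : α = Trq p F (a ^ 2)) (hβ : β = Trq p F (b ^ 2))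
    (hγ : γ = Trq p F (a * b)) :
    (α = 0 ∧ β = 0 ∧ γ = 0 →
      (((univ.filter (fun d : F =>
      Trq p F (d ^ 2) = 0 ∧ Trq p F (a * d) = 0 ∧ Trq p F (b * d) = 0)).card : ℕ) : ℂ) = (p : ℂ) ^ ((m : ℤ) - 3 : ℤ) + (p : ℂ)⁻¹ * ((p : ℂ) - 1) * GaussQ p F) ∧
    (α ≠ 0 ∧ β ≠ 0 ∧ α * β = γ ^ 2 →
      (((univ.filter (fun d : F =>
      Trq p F (d ^ 2) = 0 ∧ Trq p F (a * d) = 0 ∧ Trq p F (b * d) = 0)).card : ℕ) : ℂ) = (p : ℂ) ^ ((m : ℤ) - 3 : ℤ)) ∧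
    (α ≠ 0 ∧ β ≠ 0 ∧ α * β ≠ γ ^ 2 →
      (((univ.filter (fun d : F =>
      Trq p F (d ^ 2) = 0 ∧ Trq p F (a * d) = 0 ∧ Trq p F (b * d) = 0)).card : ℕ) : ℂ) = (p : ℂ) ^ ((m : ℤ) - 3 : ℤ) + etaBar p (γ ^ 2 - α * β) * (p : ℂ) ^ (-2 : ℤ) * ((p : ℂ) - 1) * GaussQ p F) ∧
    (γ ≠ 0 ∧ (α = 0 ∨ β = 0) →
      (((univ.filter (fun d : F =>
      Trq p F (d ^ 2) = 0 ∧ Trq p F (a * d) = 0 ∧ Trq p F (b * d) = 0)).card : ℕ) : ℂ) = (p : ℂ) ^ ((m : ℤ) - 3 : ℤ) + (p : ℂ) ^ (-2 : ℤ) * ((p : ℂ) - 1) * GaussQ p F) ∧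
    (γ = 0 ∧ ((α ≠ 0 ∧ β = 0) ∨ (α = 0 ∧ β ≠ 0)) →
      (((univ.filter (fun d : F =>
      Trq p F (d ^ 2) = 0 ∧ Trq p F (a * d) = 0 ∧ Trq p F (b * d) = 0)).card : ℕ) : ℂ) = (p : ℂ) ^ ((m : ℤ) - 3 : ℤ)) := by
  have hfin : m = Module.finrank (ZMod p) F := eq_finrank_of_card_eq_pow (by rw [hq, ZMod.card])
  have hli : LinearIndependent (ZMod p) ![a, b] := linearIndependent_pair_of_forall_ne_smul ha hb
    fun w hw ↦ Algebra.smul_def w b ▸ hab w hw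
  rw [etaBar_eq_quadraticChar]
  exact Omega_card_m_even_general (ringChar_zmod_ne_two_of_odd hp) (hfin ▸ hmeven) stdAddChar_ne_one
    hli hα hβ hγ rfl (by rw [ZMod.card]) (GaussQ_eq_quadraticGaussSum F) hfin
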